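/- Suppose ω : [0,1] → ℝ is continuous, ω(x) > 0 for all x ∈ (0,1), and: at x = 0 either ω(0) > 0 or (ω(0) = 0 and ω is monotone increasing on some interval [0, δ] with δ > 0); and at x = 1 either ω(1) > 0 or (ω(1) = 0 and ω is monotone decreasing on some interval [1−δ', 1] with δ' > 0). Then there exists a smallest μ > 0 for which there is a nonzero function φ ∈ C¹([0,1]) with φ'(0) = φ'(1) = 0 such that ω φ' is differentiable on (0,1) and (ω(x) φ'(x))' = −μ ω(x) φ(x) for all x ∈ (0,1); moreover, for this μ the solution φ is unique up to multiplication by a nonzero scalar. -/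

import Mathlib

open MeasureTheory Set Filter Topology

noncomputable section

/-- `(φ, φd)` is a (nonzero, C¹ on [0,1]) solution of the Neumann problem
`-(ω φ')' = μ ω φ` on (0,1), with `φ'(0) = φ'(1) = 0`. -/
def NeumannSol (ω : ℝ → ℝ) (μ : ℝ) (φ φd : ℝ → ℝ) : Prop :=
  (∀ x ∈ Icc (0:ℝ) 1, HasDerivWithinAt φ (φd x) (Icc 0 1) x) ∧
  ContinuousOn φd (Icc 0 1) ∧ φd 0 = 0 ∧ φd 1 = 0 ∧
  (∃ x ∈ Icc (0:ℝ) 1, φ x ≠ 0) ∧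
  ∀ x ∈ Ioo (0:ℝ) 1, HasDerivAt (fun t => ω t * φd t) (-(μ * ω x * φ x)) x

/-- `μ` is a Neumann eigenvalue of `-(ω φ')' = μ ω φ`. -/
def IsNeumannEigenvalue (ω : ℝ → ℝ) (μ : ℝ) : Prop := ∃ φ φd, NeumannSol ω μ φ φd

/-! For each `μ` the solution of `-(ω φ')' = μ ω φ` which is regular at `0`, normalised by
`φ(0) = 1`, is the sum of its Neumann series, and so is the one regular at `1`; `μ ≠ 0` is a Neumann
eigenvalue iff the Wronskian of the two vanishes, which is a closed condition on `μ`. After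
division by `-μ ω`, the Wronskian extends to `μ = 0` and is positive there, so the positive
eigenvalues form a closed set, which has a least element once it is nonempty.

If there were no positive eigenvalue, the two solutions would never vanish at a common point. Then
for every `μ ≥ 0` the intervals before their first zeros, each counted from its own endpoint, would
either overlap or leave a gap between them, and both alternatives are open in `μ`. The first holds
at `μ = 0` and fails for large `μ`, contradicting the connectedness of `[0, ∞)`. -/

theorem exists_first_zero {f : ℝ → ℝ} {a b : ℝ} (hab : a ≤ b) (hf : ContinuousOn f (Icc a b))
    (ha : 0 < f a) (hb : f b ≤ 0) :
    ∃ z ∈ Ioc a b, f z = 0 ∧ ∀ x ∈ Ico a z, 0 < f x := by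
  obtain ⟨y, hy, hy0⟩ := intermediate_value_Icc' hab hf ⟨hb, ha.le⟩
  have hcompact : IsCompact (Icc a b ∩ f ⁻¹' {0}) :=
    isCompact_Icc.of_isClosed_subset
      (hf.preimage_isClosed_of_isClosed isClosed_Icc isClosed_singleton) inter_subset_left
  obtain ⟨z, ⟨hz, hz0⟩, hleast⟩ := hcompact.exists_isLeast ⟨y, hy, hy0⟩
  have haz : a < z := hz.1.lt_of_ne fun h ↦ ha.ne' (h ▸ hz0)
  refine ⟨z, ⟨haz, hz.2⟩, hz0, fun x hx ↦ ?_⟩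
  by_contra! hx0
  have hxb : x ≤ b := hx.2.le.trans hz.2
  obtain ⟨t, ht, ht0⟩ :=
    intermediate_value_Icc' hx.1 (hf.mono (Icc_subset_Icc_right hxb)) ⟨hx0, ha.le⟩
  exact ((hleast ⟨⟨ht.1, ht.2.trans hxb⟩, ht0⟩).trans ht.2).not_gt hx.2

theorem exists_eqOn_Iio_eqOn_Ioi {α β : Type*} [LinearOrder α] {a b : α} {f g : α → β}
    (h : EqOn f g (Ioo a b)) :
    ∃ F : α → β, EqOn F f (Iio b) ∧ EqOn F g (Ioi a) := by
  refine ⟨fun x ↦ if x < b then f x else g x, fun x hx ↦ if_pos hx, fun x hx ↦ ?_⟩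
  by_cases hxb : x < b
  · simpa only [if_pos hxb] using h ⟨hx, hxb⟩
  · exact if_neg hxb

theorem exists_hasDerivAt_glue {a b : ℝ} {φ φd ψ ψd : ℝ → ℝ} (hab : a < b)
    (hφ : ∀ x < b, HasDerivAt φ (φd x) x) (hφd : ContinuousOn φd (Iio b))
    (hψ : ∀ x > a, HasDerivAt ψ (ψd x) x) (hψd : ContinuousOn ψd (Ioi a))
    (h : EqOn φ ψ (Ioo a b)) :
    ∃ F Fd : ℝ → ℝ, (∀ x, HasDerivAt F (Fd x) x) ∧ Continuous Fd ∧
      EqOn F φ (Iio b) ∧ EqOn Fd φd (Iio b) ∧ EqOn Fd ψd (Ioi a) := by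
  have hd : EqOn φd ψd (Ioo a b) := fun x hx ↦
    (hφ x hx.2).unique ((hψ x hx.1).congr_of_eventuallyEq
      (h.eventuallyEq_of_mem (isOpen_Ioo.mem_nhds hx)))
  obtain ⟨F, hFφ, hFψ⟩ := exists_eqOn_Iio_eqOn_Ioi h
  obtain ⟨Fd, hFdφ, hFdψ⟩ := exists_eqOn_Iio_eqOn_Ioi hd
  have hcover : ∀ x, x < b ∨ a < x := fun x ↦ (lt_or_ge x b).imp_right hab.trans_le
  refine ⟨F, Fd, fun x ↦ ?_, continuous_iff_continuousAt.2 fun x ↦ ?_, hFφ, hFdφ, hFdψ⟩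
  · rcases hcover x with hx | hx
    · exact hFdφ hx ▸ (hφ x hx).congr_of_eventuallyEq (hFφ.eventuallyEq_of_mem (Iio_mem_nhds hx))
    · exact hFdψ hx ▸ (hψ x hx).congr_of_eventuallyEq (hFψ.eventuallyEq_of_mem (Ioi_mem_nhds hx))
  · rcases hcover x with hx | hx
    · exact (hφd.congr hFdφ).continuousAt (Iio_mem_nhds hx)
    · exact (hψd.congr hFdψ).continuousAt (Ioi_mem_nhds hx)

theorem lipschitzWith_antidiagonal {K : NNReal} {α β : ℝ} (hα : ‖α‖ ≤ K) (hβ : ‖β‖ ≤ K) :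
    LipschitzWith K fun z : ℝ × ℝ ↦ (α * z.2, -(β * z.1)) := by
  refine LipschitzWith.of_dist_le_mul fun y z ↦ ?_
  simp only [dist_eq_norm, Prod.norm_def, Prod.fst_sub, Prod.snd_sub, neg_sub_neg, ← mul_sub,
    norm_mul]
  rw [norm_sub_rev z.1]
  exact max_le (mul_le_mul hα (le_max_right _ _) (norm_nonneg _) K.2)
    (mul_le_mul hβ (le_max_left _ _) (norm_nonneg _) K.2)

/-! ### The Sturm–Liouville equation -/

/-- `φ`, with derivative `φd`, solves the Sturm–Liouville equation `-(p φ')' = q φ` on `s`. The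
derivative is carried along because only the flux `p φ'`, not `φ'`, has to be differentiable. -/
structure SturmLiouvilleOn (p q φ φd : ℝ → ℝ) (s : Set ℝ) : Prop where
  hasDerivAt : ∀ x ∈ s, HasDerivAt φ (φd x) x
  hasDerivAt_flux : ∀ x ∈ s, HasDerivAt (fun t ↦ p t * φd t) (-(q x * φ x)) x

/-- The Wronskian `p (φ' ψ - φ ψ')` of two solutions of `-(p φ')' = q φ`. -/
def wronskian (p φ φd ψ ψd : ℝ → ℝ) (x : ℝ) : ℝ :=
  p x * φd x * ψ x - φ x * (p x * ψd x)

namespace SturmLiouvilleOn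

variable {p q φ φd ψ ψd : ℝ → ℝ} {s : Set ℝ} {a b c : ℝ}

theorem sub_const_mul (hψ : SturmLiouvilleOn p q ψ ψd s) (hφ : SturmLiouvilleOn p q φ φd s)
    (κ : ℝ) :
    SturmLiouvilleOn p q (fun x ↦ ψ x - κ * φ x) (fun x ↦ ψd x - κ * φd x) s where
  hasDerivAt x hx := (hψ.hasDerivAt x hx).sub ((hφ.hasDerivAt x hx).const_mul κ)
  hasDerivAt_flux x hx :=
    (((hψ.hasDerivAt_flux x hx).sub ((hφ.hasDerivAt_flux x hx).const_mul κ)).congr_deriv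
      (by ring)).congr_of_eventuallyEq (.of_forall fun t ↦ by simp only [Pi.sub_apply]; ring)

theorem comp_const_sub (h : SturmLiouvilleOn p q φ φd s) (c : ℝ) :
    SturmLiouvilleOn (fun x ↦ p (c - x)) (fun x ↦ q (c - x)) (fun x ↦ φ (c - x))
      (fun x ↦ -φd (c - x)) ((fun x ↦ c - x) ⁻¹' s) where
  hasDerivAt x hx := (h.hasDerivAt (c - x) hx).comp_const_sub c x
  hasDerivAt_flux x hx :=
    (((h.hasDerivAt_flux (c - x) hx).comp_const_sub c x).fun_neg.congr_deriv
      (neg_neg _)).congr_of_eventuallyEq (.of_forall fun _ ↦ mul_neg _ _)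

theorem hasDerivAt_wronskian (hφ : SturmLiouvilleOn p q φ φd s)
    (hψ : SturmLiouvilleOn p q ψ ψd s) {x : ℝ} (hx : x ∈ s) :
    HasDerivAt (wronskian p φ φd ψ ψd) 0 x :=
  (((hφ.hasDerivAt_flux x hx).mul (hψ.hasDerivAt x hx)).sub
    ((hφ.hasDerivAt x hx).mul (hψ.hasDerivAt_flux x hx))).congr_deriv (by ring)

theorem wronskian_eq (hφ : SturmLiouvilleOn p q φ φd s) (hψ : SturmLiouvilleOn p q ψ ψd s)
    (hs : IsOpen s) (hs' : IsPreconnected s) {x y : ℝ} (hx : x ∈ s) (hy : y ∈ s) :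
    wronskian p φ φd ψ ψd x = wronskian p φ φd ψ ψd y :=
  hs.is_const_of_deriv_eq_zero hs'
    (fun _ ht ↦ (hφ.hasDerivAt_wronskian hψ ht).differentiableAt.differentiableWithinAt)
    (fun _ ht ↦ (hφ.hasDerivAt_wronskian hψ ht).deriv) hx hy

theorem eqOn_zero (h : SturmLiouvilleOn p q φ φd (Ioo a b)) (hp : ContinuousOn p (Ioo a b))
    (hp0 : ∀ x ∈ Ioo a b, p x ≠ 0) (hq : ContinuousOn q (Ioo a b)) (hc : c ∈ Ioo a b)
    (hφc : φ c = 0) (hφdc : φd c = 0) : EqOn φ 0 (Ioo a b) := by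
  intro x hx
  obtain ⟨a', ha', ha'm⟩ := exists_between (lt_min hc.1 hx.1)
  obtain ⟨b', hb'm, hb'⟩ := exists_between (max_lt hc.2 hx.2)
  have hsub : Icc a' b' ⊆ Ioo a b := fun t ht ↦ ⟨ha'.trans_le ht.1, ht.2.trans_lt hb'⟩
  have hsub' : Ioo a' b' ⊆ Ioo a b := Ioo_subset_Icc_self.trans hsub
  obtain ⟨P, hP⟩ := isCompact_Icc.exists_bound_of_continuousOn
    ((hp.inv₀ hp0).mono hsub)
  obtain ⟨Q, hQ⟩ := isCompact_Icc.exists_bound_of_continuousOn (hq.mono hsub)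
  let K : NNReal := (max P Q).toNNReal
  let v : ℝ → ℝ × ℝ → ℝ × ℝ := fun t z ↦ ((p t)⁻¹ * z.2, -(q t * z.1))
  have hv : ∀ t ∈ Ioo a' b', LipschitzOnWith K (v t) univ := fun t ht ↦
    have hK : max P Q ≤ K := Real.le_coe_toNNReal _
    have ht' := Ioo_subset_Icc_self ht
    (lipschitzWith_antidiagonal ((hP t ht').trans ((le_max_left P Q).trans hK))
      ((hQ t ht').trans ((le_max_right P Q).trans hK))).lipschitzOnWith
  have hsol : ∀ t ∈ Ioo a' b',
      HasDerivAt (fun t ↦ (φ t, p t * φd t)) (v t (φ t, p t * φd t)) t := by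
    intro t ht
    have hφ := h.hasDerivAt t (hsub' ht)
    rw [← inv_mul_cancel_left₀ (hp0 t (hsub' ht)) (φd t)] at hφ
    exact hφ.prodMk (h.hasDerivAt_flux t (hsub' ht))
  have hzero : ∀ t ∈ Ioo a' b', HasDerivAt (fun _ ↦ (0 : ℝ × ℝ)) (v t 0) t := fun t _ ↦
    (hasDerivAt_const t (0 : ℝ × ℝ)).congr_deriv <| by
      simp only [v, Prod.fst_zero, Prod.snd_zero, mul_zero, neg_zero]; rfl
  have heq := ODE_solution_unique_of_mem_Ioo (t₀ := c) hv
    ⟨ha'm.trans_le (min_le_left _ _), (le_max_left _ _).trans_lt hb'm⟩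
    (fun t ht ↦ ⟨hsol t ht, mem_univ _⟩) (fun t ht ↦ ⟨hzero t ht, mem_univ _⟩)
    (by simp only [hφc, hφdc, mul_zero, Prod.mk_zero_zero])
  exact congrArg Prod.fst
    (heq ⟨ha'm.trans_le (min_le_right _ _), (le_max_right _ _).trans_lt hb'm⟩)

theorem exists_eq_const_mul (hφ : SturmLiouvilleOn p q φ φd (Ioo a b))
    (hψ : SturmLiouvilleOn p q ψ ψd (Ioo a b)) (hp : ContinuousOn p (Ioo a b))
    (hp0 : ∀ x ∈ Ioo a b, p x ≠ 0) (hq : ContinuousOn q (Ioo a b))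
    (hφ0 : ∃ x ∈ Ioo a b, φ x ≠ 0) (hc : c ∈ Ioo a b) (hW : wronskian p φ φd ψ ψd c = 0) :
    ∃ κ, ∀ x ∈ Ioo a b, ψ x = κ * φ x ∧ ψd x = κ * φd x := by
  have hdet : φd c * ψ c = φ c * ψd c := by
    refine mul_left_cancel₀ (hp0 c hc) ?_
    unfold wronskian at hW
    linarith
  obtain ⟨κ, hκ, hκd⟩ : ∃ κ, ψ c = κ * φ c ∧ ψd c = κ * φd c := by
    by_cases hφc : φ c = 0
    · have hφdc : φd c ≠ 0 := fun hφdc ↦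
        hφ0.elim fun x hx ↦ hx.2 (hφ.eqOn_zero hp hp0 hq hc hφc hφdc hx.1)
      refine ⟨ψd c / φd c, ?_, by field_simp⟩
      simpa [hφc, hφdc] using hdet
    · exact ⟨ψ c / φ c, by field_simp, by field_simp; linarith⟩
  have hdiff := hψ.sub_const_mul hφ κ
  have hzero : EqOn (fun x ↦ ψ x - κ * φ x) 0 (Ioo a b) :=
    hdiff.eqOn_zero hp hp0 hq hc (sub_eq_zero.2 hκ) (sub_eq_zero.2 hκd)
  refine ⟨κ, fun x hx ↦ ⟨sub_eq_zero.1 (hzero hx), sub_eq_zero.1 ?_⟩⟩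
  refine (hdiff.hasDerivAt x hx).unique ((hasDerivAt_const x (0 : ℝ)).congr_of_eventuallyEq ?_)
  exact hzero.eventuallyEq_of_mem (isOpen_Ioo.mem_nhds hx)

end SturmLiouvilleOn

/-! ### Neumann series for singular weights -/

/-- A positive continuous weight on `(0, 1)` which is almost increasing away from `1`: up to a
constant depending on `b < 1` only, `w t ≤ w s` for `t ≤ s ≤ b`. This is the only way in which the
behaviour of the weight at `0` enters; its behaviour at `1` is the same condition on
`x ↦ w (1 - x)`. -/
structure AlmostIncreasingWeight (w : ℝ → ℝ) : Prop where
  continuousOn : ContinuousOn w (Ioo 0 1)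
  pos : ∀ x ∈ Ioo (0 : ℝ) 1, 0 < w x
  almostIncreasing : ∀ b ∈ Ioo (0 : ℝ) 1, ∃ C, ∀ s ∈ Ioc 0 b, ∀ t ∈ Ioc 0 s, w t ≤ C * w s

/-- The solution `u` of `(w u)' = w f` on `(0, 1)` for which `w u` vanishes at `0`, extended by `0`
to the negative half-line so that it is continuous at `0`. -/
def fluxQuotient (w f : ℝ → ℝ) (s : ℝ) : ℝ :=
  if 0 < s then (∫ t in 0..s, w t * f t) / w s else 0

/-- The solution operator of `(w u')' = w f`, `u(0) = u'(0) = 0`. -/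
def volterra (w f : ℝ → ℝ) (x : ℝ) : ℝ :=
  ∫ s in 0..x, fluxQuotient w f s

/-- The iterates of `volterra w` on the constant function `1`. -/
def volterraIter (w : ℝ → ℝ) : ℕ → ℝ → ℝ
  | 0 => 1
  | n + 1 => volterra w (volterraIter w n)

theorem fluxQuotient_of_nonpos {w f : ℝ → ℝ} {s : ℝ} (hs : s ≤ 0) : fluxQuotient w f s = 0 :=
  if_neg hs.not_gt

theorem volterra_of_nonpos {w f : ℝ → ℝ} {x : ℝ} (hx : x ≤ 0) : volterra w f x = 0 := by
  rw [volterra, intervalIntegral.integral_congr (g := fun _ ↦ 0),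
    intervalIntegral.integral_zero]
  exact fun s hs ↦ fluxQuotient_of_nonpos (uIcc_of_ge hx ▸ hs).2

namespace AlmostIncreasingWeight

variable {w f : ℝ → ℝ} {b B C s x : ℝ}

theorem exists_bound (hw : AlmostIncreasingWeight w) (hb : b ∈ Ioo (0 : ℝ) 1) :
    ∃ C, 0 ≤ C ∧ ∀ s ∈ Ioc 0 b, ∀ t ∈ Ioc 0 s, |w t| ≤ C * w s := by
  obtain ⟨C, hC⟩ := hw.almostIncreasing b hb
  have hmem : ∀ s ∈ Ioc 0 b, ∀ t ∈ Ioc 0 s, |w t| ≤ C * w s := fun s hs t ht ↦ by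
    rw [abs_of_pos (hw.pos t ⟨ht.1, (ht.2.trans hs.2).trans_lt hb.2⟩)]
    exact hC s hs t ht
  have hbb : b ∈ Ioc 0 b := right_mem_Ioc.2 hb.1
  exact ⟨C, nonneg_of_mul_nonneg_left ((abs_nonneg _).trans (hmem b hbb b hbb)) (hw.pos b hb),
    hmem⟩

theorem exists_abs_le (hw : AlmostIncreasingWeight w) (hb : b ∈ Ioo (0 : ℝ) 1) :
    ∃ M, ∀ t ∈ Ioc 0 b, |w t| ≤ M :=
  let ⟨C, _, hC⟩ := hw.exists_bound hb
  ⟨C * w b, hC b (right_mem_Ioc.2 hb.1)⟩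

theorem tendsto_mul_zero (hw : AlmostIncreasingWeight w) (hf : Tendsto f (𝓝[>] 0) (𝓝 0)) :
    Tendsto (fun x ↦ w x * f x) (𝓝[>] 0) (𝓝 0) := by
  have hhalf : (1 / 2 : ℝ) ∈ Ioo (0 : ℝ) 1 := by norm_num
  obtain ⟨M, hM⟩ := hw.exists_abs_le hhalf
  exact isBoundedUnder_le_mul_tendsto_zero (isBoundedUnder_of_eventually_le (a := M)
    (Filter.eventually_of_mem (Ioc_mem_nhdsGT hhalf.1) hM)) hf

theorem intervalIntegrable_mul (hw : AlmostIncreasingWeight w) (hf : ContinuousOn f (Ico 0 1))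
    (hx : x ∈ Ioo (0 : ℝ) 1) : IntervalIntegrable (fun t ↦ w t * f t) volume 0 x := by
  obtain ⟨M, hM⟩ := hw.exists_abs_le hx
  obtain ⟨B, hB⟩ := isCompact_Icc.exists_bound_of_continuousOn
    (hf.mono (Icc_subset_Ico_right hx.2))
  rw [intervalIntegrable_iff_integrableOn_Ioc_of_le hx.1.le]
  have hcont : ContinuousOn (fun t ↦ w t * f t) (Ioc 0 x) :=
    (hw.continuousOn.mul (hf.mono Ioo_subset_Ico_self)).mono (Ioc_subset_Ioo_right hx.2)
  refine .of_bound measure_Ioc_lt_top (hcont.aestronglyMeasurable measurableSet_Ioc) (M * B)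
    (ae_restrict_of_forall_mem measurableSet_Ioc fun t ht ↦ ?_)
  rw [norm_mul]
  exact mul_le_mul (hM t ht) (hB t (Ioc_subset_Icc_self ht)) (norm_nonneg _)
    ((abs_nonneg _).trans (hM t ht))

theorem hasDerivAt_integral (hw : AlmostIncreasingWeight w) (hf : ContinuousOn f (Ico 0 1))
    (hx : x ∈ Ioo (0 : ℝ) 1) :
    HasDerivAt (fun s ↦ ∫ t in 0..s, w t * f t) (w x * f x) x := by
  have hcont : ContinuousOn (fun t ↦ w t * f t) (Ioo 0 1) :=
    hw.continuousOn.mul (hf.mono Ioo_subset_Ico_self)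
  exact intervalIntegral.integral_hasDerivAt_right (hw.intervalIntegrable_mul hf hx)
    (hcont.stronglyMeasurableAtFilter isOpen_Ioo x hx)
    (hcont.continuousAt (isOpen_Ioo.mem_nhds hx))

theorem mul_fluxQuotient (hw : AlmostIncreasingWeight w) (hx : x ∈ Ioo (0 : ℝ) 1) :
    w x * fluxQuotient w f x = ∫ t in 0..x, w t * f t := by
  rw [fluxQuotient, if_pos hx.1, mul_div_cancel₀ _ (hw.pos x hx).ne']

theorem hasDerivAt_mul_fluxQuotient (hw : AlmostIncreasingWeight w)
    (hf : ContinuousOn f (Ico 0 1)) (hx : x ∈ Ioo (0 : ℝ) 1) :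
    HasDerivAt (fun t ↦ w t * fluxQuotient w f t) (w x * f x) x :=
  (hw.hasDerivAt_integral hf hx).congr_of_eventuallyEq <|
    Filter.eventually_of_mem (isOpen_Ioo.mem_nhds hx) fun _ ht ↦ hw.mul_fluxQuotient ht

theorem abs_fluxQuotient_le (hw : AlmostIncreasingWeight w) (hs : s ∈ Ioo (0 : ℝ) 1)
    (hC : ∀ t ∈ Ioc 0 s, |w t| ≤ C * w s) (hB : ∀ t ∈ Ioc 0 s, |f t| ≤ B) :
    |fluxQuotient w f s| ≤ C * B * s := by
  have hws := hw.pos s hs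
  have hint : ‖∫ t in 0..s, w t * f t‖ ≤ C * w s * B * |s - 0| := by
    refine intervalIntegral.norm_integral_le_of_norm_le_const fun t ht ↦ ?_
    rw [uIoc_of_le hs.1.le] at ht
    rw [norm_mul]
    exact mul_le_mul (hC t ht) (hB t ht) (norm_nonneg _) ((abs_nonneg _).trans (hC t ht))
  rw [fluxQuotient, if_pos hs.1, abs_div, abs_of_pos hws, div_le_iff₀ hws]
  rw [sub_zero, abs_of_pos hs.1, Real.norm_eq_abs] at hint
  linarith

theorem tendsto_fluxQuotient_zero (hw : AlmostIncreasingWeight w)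
    (hf : ContinuousOn f (Ico 0 1)) : Tendsto (fluxQuotient w f) (𝓝 0) (𝓝 0) := by
  have hhalf : (1 / 2 : ℝ) ∈ Ioo (0 : ℝ) 1 := by norm_num
  obtain ⟨C, hC0, hC⟩ := hw.exists_bound hhalf
  obtain ⟨B, hB⟩ := isCompact_Icc.exists_bound_of_continuousOn
    (hf.mono (Icc_subset_Ico_right hhalf.2))
  refine squeeze_zero_norm' (a := fun s ↦ C * B * |s|) ?_ ?_
  · filter_upwards [Iio_mem_nhds hhalf.1] with s hs
    rcases le_or_gt s 0 with hs0 | hs0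
    · rw [fluxQuotient_of_nonpos hs0, norm_zero]
      exact mul_nonneg (mul_nonneg hC0 ((norm_nonneg _).trans (hB 0 (by norm_num))))
        (abs_nonneg s)
    · rw [abs_of_pos hs0]
      exact hw.abs_fluxQuotient_le ⟨hs0, hs.trans hhalf.2⟩ (hC s ⟨hs0, hs.le⟩)
        fun t ht ↦ hB t ⟨ht.1.le, ht.2.trans hs.le⟩
  · exact (continuous_const.mul continuous_abs).tendsto' 0 0 (by simp)

theorem continuousOn_fluxQuotient (hw : AlmostIncreasingWeight w)
    (hf : ContinuousOn f (Ico 0 1)) : ContinuousOn (fluxQuotient w f) (Iio 1) := by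
  refine fun x hx ↦ ContinuousAt.continuousWithinAt ?_
  rcases lt_trichotomy x 0 with hx0 | rfl | hx0
  · exact continuousAt_const.congr
      (Filter.eventually_of_mem (Iio_mem_nhds hx0) fun t ht ↦ (fluxQuotient_of_nonpos ht.le).symm)
  · rw [ContinuousAt, fluxQuotient_of_nonpos le_rfl]
    exact hw.tendsto_fluxQuotient_zero hf
  · have hmem : Ioo 0 1 ∈ 𝓝 x := isOpen_Ioo.mem_nhds ⟨hx0, hx⟩
    refine ((hw.hasDerivAt_integral hf ⟨hx0, hx⟩).continuousAt.div
      (hw.continuousOn.continuousAt hmem) (hw.pos x ⟨hx0, hx⟩).ne').congr ?_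
    filter_upwards [hmem] with t ht
    exact (if_pos ht.1).symm

theorem hasDerivAt_volterra (hw : AlmostIncreasingWeight w) (hf : ContinuousOn f (Ico 0 1))
    (hx : x < 1) : HasDerivAt (volterra w f) (fluxQuotient w f x) x := by
  have hcont := hw.continuousOn_fluxQuotient hf
  refine intervalIntegral.integral_hasDerivAt_right ?_
    (hcont.stronglyMeasurableAtFilter isOpen_Iio x hx) (hcont.continuousAt (Iio_mem_nhds hx))
  exact (hcont.mono fun t ht ↦ ht.2.trans_lt (max_lt one_pos hx)).intervalIntegrable

theorem continuousOn_volterraIter (hw : AlmostIncreasingWeight w) (n : ℕ) :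
    ContinuousOn (volterraIter w n) (Iio 1) := by
  induction n with
  | zero => exact continuousOn_const
  | succ n ih =>
    exact fun x hx ↦ (hw.hasDerivAt_volterra (ih.mono Ico_subset_Iio_self)
      hx).continuousAt.continuousWithinAt

theorem abs_volterraIter_le (hw : AlmostIncreasingWeight w) (hb : b < 1) (hC0 : 0 ≤ C)
    (hC : ∀ s ∈ Ioc 0 b, ∀ t ∈ Ioc 0 s, |w t| ≤ C * w s) (n : ℕ) (hx : x ∈ Icc 0 b) :
    |volterraIter w n x| ≤ (C * x) ^ n / n.factorial := by
  induction n generalizing x with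
  | zero => simp [volterraIter]
  | succ n ih =>
    have hflux : ∀ s ∈ Ioc 0 x,
        ‖fluxQuotient w (volterraIter w n) s‖ ≤ C * ((C * s) ^ n / n.factorial) := by
      intro s hs
      have hsb : s ∈ Ioc 0 b := ⟨hs.1, hs.2.trans hx.2⟩
      have hs1 : s ∈ Ioo (0 : ℝ) 1 := ⟨hs.1, hsb.2.trans_lt hb⟩
      have hiter : ∀ t ∈ Ioc 0 s, |volterraIter w n t| ≤ (C * s) ^ n / n.factorial :=
        fun t ht ↦ (ih ⟨ht.1.le, ht.2.trans hsb.2⟩).trans <| by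
          have := ht.1.le
          have := ht.2
          gcongr
      have hnonneg : 0 ≤ C * ((C * s) ^ n / n.factorial) := by
        have := hs.1.le
        positivity
      exact (hw.abs_fluxQuotient_le hs1 (hC s hsb) hiter).trans
        (mul_le_of_le_one_right hnonneg hs1.2.le)
    calc |volterraIter w (n + 1) x|
        ≤ ∫ s in 0..x, C * ((C * s) ^ n / n.factorial) :=
          intervalIntegral.norm_integral_le_of_norm_le hx.1 (.of_forall hflux)
            (Continuous.intervalIntegrable (by fun_prop) _ _)
      _ = (C * x) ^ (n + 1) / (n + 1).factorial := by
          simp only [mul_pow, intervalIntegral.integral_const_mul,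
            intervalIntegral.integral_div, integral_pow, Nat.factorial_succ]
          push_cast
          field_simp
          ring

theorem abs_volterraIter_le_of_lt (hw : AlmostIncreasingWeight w) (hb : b < 1) (hC0 : 0 ≤ C)
    (hC : ∀ s ∈ Ioc 0 b, ∀ t ∈ Ioc 0 s, |w t| ≤ C * w s) (n : ℕ) (hx : x < b) :
    |volterraIter w n x| ≤ C ^ n / n.factorial := by
  rcases le_or_gt x 0 with hx0 | hx0
  · cases n with
    | zero => simp [volterraIter]
    | succ n =>
      rw [volterraIter, volterra_of_nonpos hx0, abs_zero]
      positivity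
  · refine (hw.abs_volterraIter_le hb hC0 hC n ⟨hx0.le, hx.le⟩).trans ?_
    gcongr
    exact mul_le_of_le_one_right hC0 (hx.trans hb).le

end AlmostIncreasingWeight

/-- The functions `F n` are bounded on `U` by the Taylor coefficients of an exponential function,
so that the series `altSeries F μ` converges for all `μ`. -/
def ExpBoundedOn (F : ℕ → ℝ → ℝ) (U : Set ℝ) : Prop :=
  ∃ A C : ℝ, ∀ n, ∀ x ∈ U, |F n x| ≤ A * (C ^ n / n.factorial)

/-- The power series in `-μ` with coefficients `F n x`. -/
def altSeries (F : ℕ → ℝ → ℝ) (μ x : ℝ) : ℝ :=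
  ∑' n, (-μ) ^ n * F n x

namespace ExpBoundedOn

variable {F G : ℕ → ℝ → ℝ} {U V : Set ℝ} {μ x : ℝ}

theorem exists_majorant (hF : ExpBoundedOn F U) (m : ℝ) :
    ∃ u : ℕ → ℝ, Summable u ∧ ∀ μ, |μ| ≤ m → ∀ n, ∀ x ∈ U, |(-μ) ^ n * F n x| ≤ u n := by
  obtain ⟨A, C, hAC⟩ := hF
  refine ⟨fun n ↦ A * ((m * C) ^ n / n.factorial),
    (Real.summable_pow_div_factorial _).mul_left A, fun μ hμ n x hx ↦ ?_⟩
  have hm : 0 ≤ m := (abs_nonneg μ).trans hμ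
  calc |(-μ) ^ n * F n x| = |μ| ^ n * |F n x| := by rw [abs_mul, abs_pow, abs_neg]
    _ ≤ m ^ n * (A * (C ^ n / n.factorial)) :=
      mul_le_mul (pow_le_pow_left₀ (abs_nonneg μ) hμ n) (hAC n x hx) (abs_nonneg _)
        (pow_nonneg hm n)
    _ = A * ((m * C) ^ n / n.factorial) := by ring

theorem mul_left (hF : ExpBoundedOn F U) (hVU : V ⊆ U) {v : ℝ → ℝ} {M : ℝ}
    (hv : ∀ x ∈ V, |v x| ≤ M) : ExpBoundedOn (fun n x ↦ v x * F n x) V := by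
  obtain ⟨A, C, hAC⟩ := hF
  refine ⟨M * A, C, fun n x hx ↦ ?_⟩
  rw [abs_mul, mul_assoc]
  exact mul_le_mul (hv x hx) (hAC n x (hVU hx)) (abs_nonneg _) ((abs_nonneg _).trans (hv x hx))

theorem summable (hF : ExpBoundedOn F U) (hx : x ∈ U) :
    Summable fun n ↦ (-μ) ^ n * F n x :=
  let ⟨_, hu, hle⟩ := hF.exists_majorant |μ|
  .of_norm_bounded hu fun n ↦ hle μ le_rfl n x hx

theorem altSeries_eq (hF : ExpBoundedOn F U) (hx : x ∈ U) :
    altSeries F μ x = F 0 x - μ * altSeries (fun n ↦ F (n + 1)) μ x := by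
  rw [altSeries, (hF.summable hx).tsum_eq_zero_add, altSeries, ← tsum_mul_left, pow_zero, one_mul,
    sub_eq_add_neg, ← tsum_neg]
  exact congrArg _ (tsum_congr fun n ↦ by ring)

theorem continuousAt_altSeries (hF : ExpBoundedOn F U) (hU : IsOpen U)
    (hc : ∀ n, ContinuousOn (F n) U) (hx : x ∈ U) :
    ContinuousAt (fun p : ℝ × ℝ ↦ altSeries F p.1 p.2) (μ, x) := by
  obtain ⟨u, hu, hle⟩ := hF.exists_majorant (|μ| + 1)
  have hcont : ContinuousOn (fun p : ℝ × ℝ ↦ altSeries F p.1 p.2)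
      ({ν | |ν| < |μ| + 1} ×ˢ U) := by
    refine continuousOn_tsum (fun n ↦ ?_) hu fun n p hp ↦ hle p.1 hp.1.le n p.2 hp.2
    exact (continuous_fst.neg.pow n).continuousOn.mul
      ((hc n).comp continuousOn_snd fun p hp ↦ hp.2)
  exact hcont.continuousAt
    (prod_mem_nhds ((isOpen_lt continuous_abs continuous_const).mem_nhds (lt_add_one |μ|))
      (hU.mem_nhds hx))

theorem hasDerivAt_altSeries (hG : ExpBoundedOn G U) (hU : IsOpen U) (hU' : IsPreconnected U)
    (hFG : ∀ n, ∀ x ∈ U, HasDerivAt (F n) (G n x) x) {y : ℝ} (hy : y ∈ U)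
    (hsum : Summable fun n ↦ (-μ) ^ n * F n y) (hx : x ∈ U) :
    HasDerivAt (altSeries F μ) (altSeries G μ x) x :=
  let ⟨_, hu, hle⟩ := hG.exists_majorant |μ|
  hasDerivAt_tsum_of_isPreconnected hu hU hU'
    (fun n t ht ↦ (hFG n t ht).const_mul ((-μ) ^ n)) (fun n t ht ↦ hle μ le_rfl n t ht) hy hsum hx

end ExpBoundedOn

/-- The solution `φ` of `-(w φ')' = μ w φ` with `φ(0) = 1` and `φ'(0) = 0`, as a power series in
`μ`. -/
def regularSol (w : ℝ → ℝ) (μ x : ℝ) : ℝ :=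
  altSeries (volterraIter w) μ x

/-- The function `h` for which `regularSol w μ` has derivative `-μ h`. -/
def regularSlope (w : ℝ → ℝ) (μ x : ℝ) : ℝ :=
  altSeries (fun n ↦ fluxQuotient w (volterraIter w n)) μ x

theorem regularSol_at_zero (w : ℝ → ℝ) (μ : ℝ) : regularSol w μ 0 = 1 := by
  refine (tsum_eq_single 0 fun n hn ↦ ?_).trans (by simp [volterraIter])
  obtain ⟨k, rfl⟩ := Nat.exists_eq_succ_of_ne_zero hn
  rw [volterraIter, volterra_of_nonpos le_rfl, mul_zero]

theorem regularSlope_at_zero (w : ℝ → ℝ) (μ : ℝ) : regularSlope w μ 0 = 0 := by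
  simp [regularSlope, altSeries, fluxQuotient_of_nonpos]

theorem regularSol_zero (w : ℝ → ℝ) (x : ℝ) : regularSol w 0 x = 1 :=
  (tsum_eq_single 0 fun n hn ↦ by simp [hn]).trans (by simp [volterraIter])

namespace AlmostIncreasingWeight

variable {w : ℝ → ℝ} {b c μ x : ℝ}

theorem expBoundedOn_volterraIter (hw : AlmostIncreasingWeight w) (hb : b ∈ Ioo (0 : ℝ) 1) :
    ExpBoundedOn (volterraIter w) (Iio b) := by
  obtain ⟨C, hC0, hC⟩ := hw.exists_bound hb
  refine ⟨1, C, fun n x hx ↦ ?_⟩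
  rw [one_mul]
  exact hw.abs_volterraIter_le_of_lt hb.2 hC0 hC n hx

theorem expBoundedOn_fluxQuotient (hw : AlmostIncreasingWeight w) (hb : b ∈ Ioo (0 : ℝ) 1) :
    ExpBoundedOn (fun n ↦ fluxQuotient w (volterraIter w n)) (Iio b) := by
  obtain ⟨C, hC0, hC⟩ := hw.exists_bound hb
  refine ⟨C, C, fun n x hx ↦ ?_⟩
  have hx1 : x < 1 := hx.trans hb.2
  rcases le_or_gt x 0 with hx0 | hx0
  · simp only [fluxQuotient_of_nonpos hx0, abs_zero]
    positivity
  · exact (hw.abs_fluxQuotient_le ⟨hx0, hx1⟩ (hC x ⟨hx0, le_of_lt hx⟩) fun t ht ↦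
      hw.abs_volterraIter_le_of_lt hb.2 hC0 hC n (ht.2.trans_lt hx)).trans
        (mul_le_of_le_one_right (by positivity) hx1.le)

theorem continuousAt_regularSol (hw : AlmostIncreasingWeight w) (hx : x < 1) :
    ContinuousAt (fun p : ℝ × ℝ ↦ regularSol w p.1 p.2) (μ, x) := by
  obtain ⟨b, hxb, hb1⟩ := exists_between (max_lt hx one_pos)
  have hb : b ∈ Ioo (0 : ℝ) 1 := ⟨(le_max_right _ _).trans_lt hxb, hb1⟩
  exact (hw.expBoundedOn_volterraIter hb).continuousAt_altSeries isOpen_Iio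
    (fun n ↦ (hw.continuousOn_volterraIter n).mono (Iio_subset_Iio hb1.le))
    ((le_max_left _ _).trans_lt hxb)

theorem continuousAt_regularSlope (hw : AlmostIncreasingWeight w) (hx : x < 1) :
    ContinuousAt (fun p : ℝ × ℝ ↦ regularSlope w p.1 p.2) (μ, x) := by
  obtain ⟨b, hxb, hb1⟩ := exists_between (max_lt hx one_pos)
  have hb : b ∈ Ioo (0 : ℝ) 1 := ⟨(le_max_right _ _).trans_lt hxb, hb1⟩
  exact (hw.expBoundedOn_fluxQuotient hb).continuousAt_altSeries isOpen_Iio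
    (fun n ↦ (hw.continuousOn_fluxQuotient ((hw.continuousOn_volterraIter n).mono
      Ico_subset_Iio_self)).mono (Iio_subset_Iio hb1.le))
    ((le_max_left _ _).trans_lt hxb)

theorem continuousOn_regularSlope (hw : AlmostIncreasingWeight w) :
    ContinuousOn (regularSlope w μ) (Iio 1) := fun _ hx ↦
  ((hw.continuousAt_regularSlope hx).comp
    (Continuous.prodMk_right μ).continuousAt).continuousWithinAt

theorem continuous_regularSol_param (hw : AlmostIncreasingWeight w) (hx : x < 1) :
    Continuous fun μ ↦ regularSol w μ x :=
  continuous_iff_continuousAt.2 fun μ ↦ ContinuousAt.comp (x := μ) (f := fun μ ↦ (μ, x))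
    (hw.continuousAt_regularSol hx) (Continuous.prodMk_left x).continuousAt

theorem continuous_regularSlope_param (hw : AlmostIncreasingWeight w) (hx : x < 1) :
    Continuous fun μ ↦ regularSlope w μ x :=
  continuous_iff_continuousAt.2 fun μ ↦ ContinuousAt.comp (x := μ) (f := fun μ ↦ (μ, x))
    (hw.continuousAt_regularSlope hx) (Continuous.prodMk_left x).continuousAt

theorem hasDerivAt_regularSol (hw : AlmostIncreasingWeight w) (hx : x < 1) :
    HasDerivAt (regularSol w μ) (-μ * regularSlope w μ x) x := by
  obtain ⟨b, hxb, hb1⟩ := exists_between (max_lt hx one_pos)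
  have hb : b ∈ Ioo (0 : ℝ) 1 := ⟨(le_max_right _ _).trans_lt hxb, hb1⟩
  have hx' : x ∈ Iio b := (le_max_left _ _).trans_lt hxb
  have htail : HasDerivAt (altSeries (fun n ↦ volterraIter w (n + 1)) μ) (regularSlope w μ x) x :=
    (hw.expBoundedOn_fluxQuotient hb).hasDerivAt_altSeries isOpen_Iio isPreconnected_Iio
      (fun n t ht ↦ hw.hasDerivAt_volterra ((hw.continuousOn_volterraIter n).mono
        Ico_subset_Iio_self) (ht.trans hb1)) (y := 0) hb.1
      (by simp [volterraIter, volterra_of_nonpos, summable_zero]) hx'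
  refine ((htail.const_mul (-μ)).const_add 1).congr_of_eventuallyEq ?_
  filter_upwards [Iio_mem_nhds hx'] with t ht
  rw [regularSol, (hw.expBoundedOn_volterraIter hb).altSeries_eq ht, volterraIter, Pi.one_apply]
  ring

theorem hasDerivAt_mul_regularSlope (hw : AlmostIncreasingWeight w) (hx : x ∈ Ioo (0 : ℝ) 1) :
    HasDerivAt (fun t ↦ w t * regularSlope w μ t) (w x * regularSol w μ x) x := by
  obtain ⟨b, hxb, hb1⟩ := exists_between hx.2
  have hb : b ∈ Ioo (0 : ℝ) 1 := ⟨hx.1.trans hxb, hb1⟩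
  obtain ⟨M, hM⟩ := hw.exists_abs_le hb
  have hM' : ∀ t ∈ Ioo 0 b, |w t| ≤ M := fun t ht ↦ hM t (Ioo_subset_Ioc_self ht)
  have hbound := (hw.expBoundedOn_volterraIter hb).mul_left Ioo_subset_Iio_self hM'
  have hbound' := (hw.expBoundedOn_fluxQuotient hb).mul_left Ioo_subset_Iio_self hM'
  have hmul : ∀ (F : ℕ → ℝ → ℝ) (t : ℝ),
      altSeries (fun n s ↦ w s * F n s) μ t = w t * altSeries F μ t := fun F t ↦ by
    simp only [altSeries, ← tsum_mul_left, mul_left_comm]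
  have hderiv := hbound.hasDerivAt_altSeries (μ := μ) isOpen_Ioo isPreconnected_Ioo
    (fun n t ht ↦ hw.hasDerivAt_mul_fluxQuotient ((hw.continuousOn_volterraIter n).mono
      Ico_subset_Iio_self) ⟨ht.1, ht.2.trans hb1⟩) ⟨hx.1, hxb⟩ (hbound'.summable ⟨hx.1, hxb⟩)
    ⟨hx.1, hxb⟩
  rw [hmul] at hderiv
  exact hderiv.congr_of_eventuallyEq (.of_forall fun t ↦ (hmul _ t).symm)

end AlmostIncreasingWeight

/-! ### Solutions regular at one endpoint -/

/-- `φ`, with derivative `φd`, solves `-(w φ')' = μ w φ` on `(0, 1)` and is C¹ up to the endpoint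
`0`, where `φ' = 0`. Solutions regular at `1` are handled by reflection. -/
structure LeftNeumannSol (w : ℝ → ℝ) (μ : ℝ) (φ φd : ℝ → ℝ) : Prop extends
    SturmLiouvilleOn w (fun x ↦ μ * w x) φ φd (Ioo 0 1) where
  continuousOn : ContinuousOn φ (Ico 0 1)
  continuousOn_deriv : ContinuousOn φd (Ico 0 1)
  deriv_zero : φd 0 = 0

namespace LeftNeumannSol

variable {w φ φd ψ ψd : ℝ → ℝ} {μ : ℝ}

theorem tendsto (h : LeftNeumannSol w μ φ φd) : Tendsto φ (𝓝[>] 0) (𝓝 (φ 0)) :=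
  ((h.continuousOn 0 (left_mem_Ico.2 one_pos)).mono_of_mem_nhdsWithin
    (Ico_mem_nhdsGT one_pos)).tendsto

theorem tendsto_mul_deriv (h : LeftNeumannSol w μ φ φd) (hw : AlmostIncreasingWeight w) :
    Tendsto (fun x ↦ w x * φd x) (𝓝[>] 0) (𝓝 0) := by
  have hlim : Tendsto φd (𝓝[>] 0) (𝓝 (φd 0)) :=
    ((h.continuousOn_deriv 0 (left_mem_Ico.2 one_pos)).mono_of_mem_nhdsWithin
      (Ico_mem_nhdsGT one_pos)).tendsto
  rw [h.deriv_zero] at hlim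
  exact hw.tendsto_mul_zero hlim

theorem wronskian_eq_zero (hφ : LeftNeumannSol w μ φ φd) (hψ : LeftNeumannSol w μ ψ ψd)
    (hw : AlmostIncreasingWeight w) {x : ℝ} (hx : x ∈ Ioo (0 : ℝ) 1) :
    wronskian w φ φd ψ ψd x = 0 := by
  have hlim : Tendsto (wronskian w φ φd ψ ψd) (𝓝[>] 0) (𝓝 (0 * ψ 0 - φ 0 * 0)) :=
    ((hφ.tendsto_mul_deriv hw).mul hψ.tendsto).sub (hφ.tendsto.mul (hψ.tendsto_mul_deriv hw))
  rw [zero_mul, mul_zero, sub_zero] at hlim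
  refine tendsto_nhds_unique (tendsto_const_nhds.congr' ?_) hlim
  filter_upwards [Ioo_mem_nhdsGT one_pos] with y hy
  exact hφ.wronskian_eq hψ.toSturmLiouvilleOn isOpen_Ioo isPreconnected_Ioo hx hy

theorem exists_eq_const_mul (hφ : LeftNeumannSol w μ φ φd) (hψ : LeftNeumannSol w μ ψ ψd)
    (hw : AlmostIncreasingWeight w) (hφ0 : ∃ x ∈ Ioo (0 : ℝ) 1, φ x ≠ 0) :
    ∃ κ, ∀ x ∈ Ioo (0 : ℝ) 1, ψ x = κ * φ x ∧ ψd x = κ * φd x :=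
  have hhalf : (1 / 2 : ℝ) ∈ Ioo (0 : ℝ) 1 := by norm_num
  hφ.toSturmLiouvilleOn.exists_eq_const_mul hψ.toSturmLiouvilleOn hw.continuousOn
    (fun x hx ↦ (hw.pos x hx).ne') (hw.continuousOn.const_mul μ) hφ0 hhalf
    (hφ.wronskian_eq_zero hψ hw hhalf)

theorem comp_one_sub (h : LeftNeumannSol (fun x ↦ w (1 - x)) μ φ φd) :
    SturmLiouvilleOn w (fun x ↦ μ * w x) (fun x ↦ φ (1 - x)) (fun x ↦ -φd (1 - x))
      (Ioo 0 1) := by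
  simpa only [sub_sub_cancel, preimage_const_sub_Ioo, sub_self, sub_zero] using
    h.comp_const_sub 1

end LeftNeumannSol

theorem AlmostIncreasingWeight.leftNeumannSol_regularSol {w : ℝ → ℝ} {μ : ℝ}
    (hw : AlmostIncreasingWeight w) :
    LeftNeumannSol w μ (regularSol w μ) (fun x ↦ -μ * regularSlope w μ x) where
  hasDerivAt _ hx := hw.hasDerivAt_regularSol hx.2
  hasDerivAt_flux _ hx :=
    (((hw.hasDerivAt_mul_regularSlope hx).const_mul (-μ)).congr_deriv
      (by ring)).congr_of_eventuallyEq (.of_forall fun _ ↦ mul_left_comm _ _ _)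
  continuousOn _ hx := (hw.hasDerivAt_regularSol hx.2).continuousAt.continuousWithinAt
  continuousOn_deriv := (hw.continuousOn_regularSlope.mono Ico_subset_Iio_self).const_mul (-μ)
  deriv_zero := by rw [regularSlope_at_zero, mul_zero]

theorem AlmostIncreasingWeight.exists_regularSol_pos {w : ℝ → ℝ} {μ : ℝ}
    (hw : AlmostIncreasingWeight w) : ∃ x ∈ Ioo (0 : ℝ) 1, 0 < regularSol w μ x :=
  have hpos : ∀ᶠ x in 𝓝[>] 0, 0 < regularSol w μ x :=
    hw.leftNeumannSol_regularSol.tendsto.eventually_const_lt (by simp [regularSol_at_zero])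
  (Filter.Eventually.and (Ioo_mem_nhdsGT one_pos) hpos).exists

namespace NeumannSol

variable {ω φ φd ψ ψd : ℝ → ℝ} {μ : ℝ}

theorem continuousOn (h : NeumannSol ω μ φ φd) : ContinuousOn φ (Icc 0 1) :=
  fun x hx ↦ (h.1 x hx).continuousWithinAt

theorem leftNeumannSol (h : NeumannSol ω μ φ φd) : LeftNeumannSol ω μ φ φd where
  hasDerivAt x hx := (h.1 x (Ioo_subset_Icc_self hx)).hasDerivAt (Icc_mem_nhds hx.1 hx.2)
  hasDerivAt_flux := h.2.2.2.2.2
  continuousOn := h.continuousOn.mono Ico_subset_Icc_self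
  continuousOn_deriv := h.2.1.mono Ico_subset_Icc_self
  deriv_zero := h.2.2.1

theorem leftNeumannSol_comp_one_sub (h : NeumannSol ω μ φ φd) :
    LeftNeumannSol (fun x ↦ ω (1 - x)) μ (fun x ↦ φ (1 - x)) (fun x ↦ -φd (1 - x)) where
  toSturmLiouvilleOn := by
    simpa only [preimage_const_sub_Ioo, sub_self, sub_zero] using h.leftNeumannSol.comp_const_sub 1
  continuousOn := h.continuousOn.comp (by fun_prop) fun x hx ↦
    ⟨sub_nonneg.2 hx.2.le, sub_le_self 1 hx.1⟩
  continuousOn_deriv := (h.2.1.comp (by fun_prop) fun x hx ↦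
    ⟨sub_nonneg.2 hx.2.le, sub_le_self 1 hx.1⟩).neg
  deriv_zero := by rw [sub_zero, h.2.2.2.1, neg_zero]

theorem exists_ne_zero (h : NeumannSol ω μ φ φd) : ∃ x ∈ Ioo (0 : ℝ) 1, φ x ≠ 0 := by
  by_contra! hzero
  obtain ⟨x, hx, hne⟩ := h.2.2.2.2.1
  exact hne (EqOn.of_subset_closure (g := 0) hzero h.continuousOn continuousOn_const
    Ioo_subset_Icc_self (closure_Ioo zero_ne_one).ge hx)

theorem exists_eq_const_mul (hφ : NeumannSol ω μ φ φd) (hψ : NeumannSol ω μ ψ ψd)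
    (hω : AlmostIncreasingWeight ω) : ∃ c, c ≠ 0 ∧ ∀ x ∈ Icc (0 : ℝ) 1, ψ x = c * φ x := by
  obtain ⟨c, hc⟩ :=
    hφ.leftNeumannSol.exists_eq_const_mul hψ.leftNeumannSol hω hφ.exists_ne_zero
  refine ⟨c, ?_, EqOn.of_subset_closure (fun x hx ↦ (hc x hx).1) hψ.continuousOn
    (hφ.continuousOn.const_mul c) Ioo_subset_Icc_self (closure_Ioo zero_ne_one).ge⟩
  rintro rfl
  obtain ⟨x, hx, hne⟩ := hψ.exists_ne_zero
  exact hne ((hc x hx).1.trans (zero_mul _))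

end NeumannSol

/-! ### The characteristic function -/

/-- The characteristic function of the Neumann problem for the weight `w`, where `v` is `w`
reflected about `1 / 2`: up to the factor `-μ w(c)`, the Wronskian at `c` of the solutions which
are regular at `0` and at `1`. -/
def neumannChar (w v : ℝ → ℝ) (c μ : ℝ) : ℝ :=
  regularSlope w μ c * regularSol v μ (1 - c) + regularSol w μ c * regularSlope v μ (1 - c)

section Characterization

variable {ω : ℝ → ℝ} {c μ : ℝ}

theorem IsNeumannEigenvalue.neumannChar_eq_zero (h : IsNeumannEigenvalue ω μ)
    (hω : AlmostIncreasingWeight ω) (hω' : AlmostIncreasingWeight fun x ↦ ω (1 - x))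
    (hμ : μ ≠ 0) (hc : c ∈ Ioo (0 : ℝ) 1) : neumannChar ω (fun x ↦ ω (1 - x)) c μ = 0 := by
  obtain ⟨φ, φd, hφ⟩ := h
  obtain ⟨y, hy, hy0⟩ := hφ.exists_ne_zero
  obtain ⟨κ, hκ⟩ := hφ.leftNeumannSol.exists_eq_const_mul hω.leftNeumannSol_regularSol hω
    ⟨y, hy, hy0⟩
  obtain ⟨κ', hκ'⟩ := hφ.leftNeumannSol_comp_one_sub.exists_eq_const_mul
    hω'.leftNeumannSol_regularSol hω'
    ⟨1 - y, ⟨sub_pos.2 hy.2, sub_lt_self 1 hy.1⟩, by rwa [sub_sub_cancel]⟩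
  obtain ⟨hsol, hslope⟩ := hκ c hc
  obtain ⟨hsol', hslope'⟩ := hκ' (1 - c) ⟨sub_pos.2 hc.2, sub_lt_self 1 hc.1⟩
  rw [sub_sub_cancel] at hsol' hslope'
  refine (mul_eq_zero.1 (?_ : -μ * neumannChar ω (fun x ↦ ω (1 - x)) c μ = 0)).resolve_left
    (neg_ne_zero.2 hμ)
  rw [neumannChar, mul_add, ← mul_assoc, hslope, mul_left_comm, hslope', hsol, hsol']
  ring

theorem exists_regularSol_eq_const_mul (hω : AlmostIncreasingWeight ω)
    (hω' : AlmostIncreasingWeight fun x ↦ ω (1 - x)) (hc : c ∈ Ioo (0 : ℝ) 1)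
    (hchar : neumannChar ω (fun x ↦ ω (1 - x)) c μ = 0) :
    ∃ κ, ∀ x ∈ Ioo (0 : ℝ) 1,
      regularSol ω μ x = κ * regularSol (fun x ↦ ω (1 - x)) μ (1 - x) := by
  have hL := hω.leftNeumannSol_regularSol (μ := μ)
  have hR := (hω'.leftNeumannSol_regularSol (μ := μ)).comp_one_sub
  obtain ⟨y, hy, hy0⟩ := hω'.exists_regularSol_pos (μ := μ)
  unfold neumannChar at hchar
  obtain ⟨κ, hκ⟩ := hR.exists_eq_const_mul hL.toSturmLiouvilleOn hω.continuousOn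
    (fun x hx ↦ (hω.pos x hx).ne') (hω.continuousOn.const_mul μ)
    ⟨1 - y, ⟨sub_pos.2 hy.2, sub_lt_self 1 hy.1⟩, by rw [sub_sub_cancel]; exact hy0.ne'⟩ hc
    (by unfold wronskian; linear_combination ω c * μ * hchar)
  exact ⟨κ, fun x hx ↦ (hκ x hx).1⟩

theorem isNeumannEigenvalue_of_neumannChar_eq_zero (hω : AlmostIncreasingWeight ω)
    (hω' : AlmostIncreasingWeight fun x ↦ ω (1 - x)) (hc : c ∈ Ioo (0 : ℝ) 1)
    (hchar : neumannChar ω (fun x ↦ ω (1 - x)) c μ = 0) : IsNeumannEigenvalue ω μ := by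
  obtain ⟨κ, hκ⟩ := exists_regularSol_eq_const_mul hω hω' hc hchar
  have hright : ∀ x > (0 : ℝ), HasDerivAt (fun x ↦ κ * regularSol (fun x ↦ ω (1 - x)) μ (1 - x))
      (κ * (μ * regularSlope (fun x ↦ ω (1 - x)) μ (1 - x))) x := fun x hx ↦
    (((hω'.hasDerivAt_regularSol (sub_lt_self 1 hx)).comp_const_sub 1 x).const_mul κ).congr_deriv
      (by ring)
  have hcontR : ContinuousOn (fun x ↦ κ * (μ * regularSlope (fun x ↦ ω (1 - x)) μ (1 - x)))
      (Ioi 0) :=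
    ((hω'.continuousOn_regularSlope.comp (by fun_prop) fun x hx ↦
      sub_lt_self (1 : ℝ) hx).const_mul μ).const_mul κ
  obtain ⟨φ, φd, hφ, hφd, hφL, hφdL, hφdR⟩ := exists_hasDerivAt_glue zero_lt_one
    (fun x hx ↦ hω.hasDerivAt_regularSol hx) (hω.continuousOn_regularSlope.const_mul (-μ))
    hright hcontR hκ
  refine ⟨φ, φd, fun x _ ↦ (hφ x).hasDerivWithinAt, hφd.continuousOn, ?_, ?_, ?_, fun x hx ↦ ?_⟩
  · simp only [hφdL (mem_Iio.2 one_pos), regularSlope_at_zero, mul_zero]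
  · simp only [hφdR (mem_Ioi.2 one_pos), sub_self, regularSlope_at_zero, mul_zero]
  · exact ⟨0, left_mem_Icc.2 zero_le_one, by
      rw [hφL (mem_Iio.2 one_pos), regularSol_at_zero]; exact one_ne_zero⟩
  · rw [hφL hx.2]
    refine (hω.leftNeumannSol_regularSol.hasDerivAt_flux x hx).congr_of_eventuallyEq ?_
    filter_upwards [Iio_mem_nhds hx.2] with t ht
    rw [hφdL ht]

end Characterization

namespace AlmostIncreasingWeight

variable {w v : ℝ → ℝ} {a b c m M μ x : ℝ}

theorem tendsto_mul_regularSlope (hw : AlmostIncreasingWeight w) :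
    Tendsto (fun x ↦ w x * regularSlope w μ x) (𝓝[>] 0) (𝓝 0) := by
  have hlim : Tendsto (regularSlope w μ) (𝓝[>] 0) (𝓝 (regularSlope w μ 0)) :=
    (hw.continuousOn_regularSlope.continuousAt (Iio_mem_nhds one_pos)).tendsto.mono_left
      nhdsWithin_le_nhds
  rw [regularSlope_at_zero] at hlim
  exact hw.tendsto_mul_zero hlim

theorem strictMonoOn_mul_regularSlope (hw : AlmostIncreasingWeight w) (hc : c < 1)
    (hpos : ∀ x ∈ Ioo 0 c, 0 < regularSol w μ x) :
    StrictMonoOn (fun x ↦ w x * regularSlope w μ x) (Ioc 0 c) := by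
  refine strictMonoOn_of_deriv_pos (convex_Ioc 0 c) (fun x hx ↦
    (hw.hasDerivAt_mul_regularSlope
      ⟨hx.1, hx.2.trans_lt hc⟩).continuousAt.continuousWithinAt) fun x hx ↦ ?_
  rw [interior_Ioc] at hx
  have hx1 : x ∈ Ioo (0 : ℝ) 1 := ⟨hx.1, hx.2.trans hc⟩
  rw [(hw.hasDerivAt_mul_regularSlope hx1).deriv]
  exact mul_pos (hw.pos x hx1) (hpos x hx)

theorem regularSlope_pos (hw : AlmostIncreasingWeight w) (hc : c ∈ Ioo (0 : ℝ) 1)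
    (hpos : ∀ x ∈ Ioo 0 c, 0 < regularSol w μ x) : 0 < regularSlope w μ c := by
  have hmono := hw.strictMonoOn_mul_regularSlope hc.2 hpos
  have hc2 : c / 2 ∈ Ioc 0 c := ⟨half_pos hc.1, (half_lt_self hc.1).le⟩
  have hnonneg : 0 ≤ w (c / 2) * regularSlope w μ (c / 2) := by
    refine le_of_tendsto (hw.tendsto_mul_regularSlope (μ := μ)) ?_
    filter_upwards [Ioc_mem_nhdsGT hc2.1] with x hx
    exact hmono.monotoneOn ⟨hx.1, hx.2.trans hc2.2⟩ hc2 hx.2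
  exact pos_of_mul_pos_right
    (hnonneg.trans_lt (hmono hc2 (right_mem_Ioc.2 hc.1) (half_lt_self hc.1))) (hw.pos c hc).le

theorem strictAntiOn_regularSol (hw : AlmostIncreasingWeight w) (hμ : 0 < μ) (hc : c < 1)
    (hpos : ∀ x ∈ Ioo 0 c, 0 < regularSol w μ x) : StrictAntiOn (regularSol w μ) (Icc 0 c) := by
  refine strictAntiOn_of_deriv_neg (convex_Icc 0 c) (fun x hx ↦
    (hw.hasDerivAt_regularSol (hx.2.trans_lt hc)).continuousAt.continuousWithinAt) fun x hx ↦ ?_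
  rw [interior_Icc] at hx
  have hx1 : x < 1 := hx.2.trans hc
  rw [(hw.hasDerivAt_regularSol hx1).deriv]
  exact mul_neg_of_neg_of_pos (neg_lt_zero.2 hμ)
    (hw.regularSlope_pos ⟨hx.1, hx1⟩ fun t ht ↦ hpos t ⟨ht.1, ht.2.trans hx.2⟩)

theorem neumannChar_zero_pos (hw : AlmostIncreasingWeight w) (hv : AlmostIncreasingWeight v)
    (hc : c ∈ Ioo (0 : ℝ) 1) : 0 < neumannChar w v c 0 := by
  simp only [neumannChar, regularSol_zero, one_mul, mul_one]
  exact add_pos (hw.regularSlope_pos hc fun x _ ↦ by simp [regularSol_zero])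
    (hv.regularSlope_pos ⟨sub_pos.2 hc.2, sub_lt_self 1 hc.1⟩ fun x _ ↦ by simp [regularSol_zero])

theorem continuous_neumannChar (hw : AlmostIncreasingWeight w) (hv : AlmostIncreasingWeight v)
    (hc : c ∈ Ioo (0 : ℝ) 1) : Continuous (neumannChar w v c) :=
  have hc' : 1 - c < 1 := sub_lt_self 1 hc.1
  ((hw.continuous_regularSlope_param hc.2).mul (hv.continuous_regularSol_param hc')).add
    ((hw.continuous_regularSol_param hc.2).mul (hv.continuous_regularSlope_param hc'))

theorem isOpen_regularSol_pos (hw : AlmostIncreasingWeight w) (hc : c < 1) :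
    IsOpen {μ | ∀ x ∈ Icc 0 c, 0 < regularSol w μ x} :=
  isOpen_iff_eventually.2 fun _ hμ ↦
    isCompact_Icc.eventually_forall_of_forall_eventually fun x hx ↦
      (hw.continuousAt_regularSol (hx.2.trans_lt hc)).eventually_const_lt (hμ x hx)

theorem mul_regularSol_mul_sub_le (hw : AlmostIncreasingWeight w) (hμ : 0 < μ) (ha : 0 < a)
    (hab : a ≤ b) (hb : b < 1) (hpos : ∀ x ∈ Icc 0 b, 0 < regularSol w μ x) (hm0 : 0 ≤ m)
    (hm : ∀ x ∈ Icc a b, m ≤ w x) :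
    m * regularSol w μ b * (b - a) ≤ w b * regularSlope w μ b := by
  have hpos' : ∀ x ∈ Ioo 0 b, 0 < regularSol w μ x := fun x hx ↦ hpos x (Ioo_subset_Icc_self hx)
  have hderiv : ∀ x ∈ Icc a b, HasDerivAt (fun t ↦ w t * regularSlope w μ t)
      (w x * regularSol w μ x) x := fun x hx ↦
    hw.hasDerivAt_mul_regularSlope ⟨ha.trans_le hx.1, hx.2.trans_lt hb⟩
  have hgrowth : m * regularSol w μ b * (b - a) ≤
      w b * regularSlope w μ b - w a * regularSlope w μ a := by
    refine (convex_Icc a b).mul_sub_le_image_sub_of_le_deriv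
      (fun x hx ↦ (hderiv x hx).continuousAt.continuousWithinAt)
      (fun x hx ↦ (hderiv x (interior_subset hx)).differentiableAt.differentiableWithinAt)
      (fun x hx ↦ ?_) a (left_mem_Icc.2 hab) b (right_mem_Icc.2 hab) hab
    have hx := interior_subset hx
    have h0x : 0 ≤ x := ha.le.trans hx.1
    rw [(hderiv x hx).deriv]
    exact mul_le_mul (hm x hx) ((hw.strictAntiOn_regularSol hμ hb hpos').antitoneOn ⟨h0x, hx.2⟩
      (right_mem_Icc.2 (ha.le.trans hab)) hx.2) (hpos b (right_mem_Icc.2 (ha.le.trans hab))).le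
      (hm0.trans (hm x hx))
  have ha1 : a ∈ Ioo (0 : ℝ) 1 := ⟨ha, hab.trans_lt hb⟩
  have hslope : 0 < w a * regularSlope w μ a := mul_pos (hw.pos a ha1)
    (hw.regularSlope_pos ha1 fun x hx ↦ hpos x ⟨hx.1.le, hx.2.le.trans hab⟩)
  linarith

theorem mul_regularSol_mul_sub_div_le_regularSlope (hw : AlmostIncreasingWeight w) (hμ : 0 < μ)
    (ha : 0 < a) (hab : a ≤ b) (hbx : b ≤ x) (hx : x < 1)
    (hpos : ∀ t ∈ Icc 0 x, 0 < regularSol w μ t) (hm0 : 0 ≤ m) (hm : ∀ t ∈ Icc a b, m ≤ w t)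
    (hM : w x ≤ M) : m * regularSol w μ b * (b - a) / M ≤ regularSlope w μ x := by
  have hb : 0 < b := ha.trans_le hab
  have hx1 : x ∈ Ioo (0 : ℝ) 1 := ⟨hb.trans_le hbx, hx⟩
  have hpos' : ∀ t ∈ Ioo 0 x, 0 < regularSol w μ t := fun t ht ↦ hpos t (Ioo_subset_Icc_self ht)
  rw [div_le_iff₀' ((hw.pos x hx1).trans_le hM)]
  calc m * regularSol w μ b * (b - a)
      ≤ w b * regularSlope w μ b := hw.mul_regularSol_mul_sub_le hμ ha hab (hbx.trans_lt hx)
        (fun t ht ↦ hpos t ⟨ht.1, ht.2.trans hbx⟩) hm0 hm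
    _ ≤ w x * regularSlope w μ x := (hw.strictMonoOn_mul_regularSlope hx hpos').monotoneOn
        ⟨hb, hbx⟩ (right_mem_Ioc.2 hx1.1) hbx
    _ ≤ M * regularSlope w μ x :=
        mul_le_mul_of_nonneg_right hM (hw.regularSlope_pos hx1 hpos').le

theorem mul_le_of_regularSol_pos (hw : AlmostIncreasingWeight w) (hμ : 0 < μ) (ha : 0 < a)
    (hab : a ≤ b) (hbc : b ≤ c) (hc : c < 1) (hpos : ∀ x ∈ Icc 0 c, 0 < regularSol w μ x)
    (hm0 : 0 ≤ m) (hm : ∀ x ∈ Icc a b, m ≤ w x) (hM : ∀ x ∈ Icc b c, w x ≤ M) :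
    μ * (m * (b - a) * (c - b)) ≤ M := by
  have hb : 0 < b := ha.trans_le hab
  have hMpos : 0 < M := (hw.pos c ⟨hb.trans_le hbc, hc⟩).trans_le (hM c (right_mem_Icc.2 hbc))
  have hderiv : ∀ x ∈ Icc b c, HasDerivAt (regularSol w μ) (-μ * regularSlope w μ x) x :=
    fun x hx ↦ hw.hasDerivAt_regularSol (hx.2.trans_lt hc)
  have hdecay : regularSol w μ c - regularSol w μ b ≤
      -μ * (m * regularSol w μ b * (b - a) / M) * (c - b) := by
    refine (convex_Icc b c).image_sub_le_mul_sub_of_deriv_le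
      (fun x hx ↦ (hderiv x hx).continuousAt.continuousWithinAt)
      (fun x hx ↦ (hderiv x (interior_subset hx)).differentiableAt.differentiableWithinAt)
      (fun x hx ↦ ?_) b (left_mem_Icc.2 hbc) c (right_mem_Icc.2 hbc) hbc
    have hx := interior_subset hx
    rw [(hderiv x hx).deriv]
    exact mul_le_mul_of_nonpos_left (hw.mul_regularSol_mul_sub_div_le_regularSlope hμ ha hab hx.1
      (hx.2.trans_lt hc) (fun t ht ↦ hpos t ⟨ht.1, ht.2.trans hx.2⟩) hm0 hm (hM x hx))
      (neg_nonpos.2 hμ.le)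
  have hposb := hpos b ⟨hb.le, hbc⟩
  have hposc := hpos c (right_mem_Icc.2 (hb.le.trans hbc))
  refine le_of_mul_le_mul_right ?_ hposb
  calc μ * (m * (b - a) * (c - b)) * regularSol w μ b
      = M * -(-μ * (m * regularSol w μ b * (b - a) / M) * (c - b)) := by field_simp
    _ ≤ M * regularSol w μ b := by gcongr; linarith

theorem bddAbove_regularSol_pos (hw : AlmostIncreasingWeight w) (hc : c ∈ Ioo (0 : ℝ) 1) :
    BddAbove {μ | ∀ x ∈ Icc 0 c, 0 < regularSol w μ x} := by
  have hc0 : 0 < c := hc.1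
  have hsub : Icc (c / 3) c ⊆ Ioo 0 1 := fun x hx ↦
    ⟨(div_pos hc0 three_pos).trans_le hx.1, hx.2.trans_lt hc.2⟩
  have hcont := hw.continuousOn.mono hsub
  obtain ⟨m, hm0, hm⟩ := isCompact_Icc.exists_forall_le' hcont fun x hx ↦ hw.pos x (hsub hx)
  obtain ⟨M, hM⟩ := isCompact_Icc.exists_bound_of_continuousOn hcont
  let δ := m * (2 * c / 3 - c / 3) * (c - 2 * c / 3)
  have hδ : 0 < δ := mul_pos (mul_pos hm0 (by linarith)) (by linarith)
  refine ⟨max 0 (M / δ), fun μ hpos ↦ (le_or_gt μ 0).elim (le_max_of_le_left ·) fun hμ ↦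
    le_max_of_le_right ((le_div_iff₀ hδ).2 ?_)⟩
  exact hw.mul_le_of_regularSol_pos hμ (div_pos hc0 three_pos) (by linarith) (by linarith) hc.2
    hpos hm0.le (fun x hx ↦ hm x ⟨hx.1, hx.2.trans (by linarith)⟩) fun x hx ↦
      (le_abs_self _).trans (hM x ⟨by linarith [hx.1], hx.2⟩)

theorem exists_maximal_regularSol_pos (hw : AlmostIncreasingWeight w) (hμ : 0 < μ) :
    ∃ z ∈ Ioc (0 : ℝ) 1, (∀ x ∈ Ico 0 z, 0 < regularSol w μ x) ∧
      (z < 1 → regularSol w μ z = 0 ∧ ∃ᶠ x in 𝓝[>] z, regularSol w μ x < 0) := by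
  by_cases hpos : ∀ x ∈ Ico (0 : ℝ) 1, 0 < regularSol w μ x
  · exact ⟨1, right_mem_Ioc.2 one_pos, hpos, fun h ↦ (lt_irrefl _ h).elim⟩
  push Not at hpos
  obtain ⟨y, hy, hy0⟩ := hpos
  have hcont : ContinuousOn (regularSol w μ) (Icc 0 y) := fun x hx ↦
    (hw.hasDerivAt_regularSol (hx.2.trans_lt hy.2)).continuousAt.continuousWithinAt
  obtain ⟨z, hz, hz0, hzpos⟩ :=
    exists_first_zero hy.1 hcont (by simp [regularSol_at_zero]) hy0
  have hz1 : z < 1 := hz.2.trans_lt hy.2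
  refine ⟨z, ⟨hz.1, hz1.le⟩, hzpos, fun _ ↦ ⟨hz0, Eventually.frequently ?_⟩⟩
  have hslope : -μ * regularSlope w μ z < 0 := mul_neg_of_neg_of_pos (neg_lt_zero.2 hμ)
    (hw.regularSlope_pos ⟨hz.1, hz1⟩ fun x hx ↦ hzpos x ⟨hx.1.le, hx.2⟩)
  filter_upwards [self_mem_nhdsWithin, ((hw.hasDerivAt_regularSol hz1).tendsto_slope.mono_left
    (nhdsGT_le_nhdsNE z)).eventually_lt_const hslope] with x hx hneg
  rw [slope_def_field, hz0, sub_zero] at hneg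
  exact neg_of_div_neg_left hneg (sub_pos.2 hx).le

end AlmostIncreasingWeight

/-! ### Existence of a positive eigenvalue -/

/-- The parameters `μ` for which the solution regular at `0` and the solution regular at `1` are
positive on two intervals which cover `(0, 1)`. -/
def subcritical (w v : ℝ → ℝ) : Set ℝ :=
  {μ | ∃ c ∈ Ioo (0 : ℝ) 1,
    (∀ x ∈ Icc 0 c, 0 < regularSol w μ x) ∧ ∀ x ∈ Icc 0 (1 - c), 0 < regularSol v μ x}

/-- The parameters `μ` for which the solution regular at `0` takes a negative value to the left of
a point at which the solution regular at `1` is negative. -/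
def supercritical (w v : ℝ → ℝ) : Set ℝ :=
  {μ | ∃ a ∈ Ioo (0 : ℝ) 1, ∃ b ∈ Ioo (0 : ℝ) 1,
    a + b < 1 ∧ regularSol w μ a < 0 ∧ regularSol v μ b < 0}

theorem disjoint_subcritical_supercritical (w v : ℝ → ℝ) :
    Disjoint (subcritical w v) (supercritical w v) := by
  refine disjoint_left.2 ?_
  rintro μ ⟨c, _, hposw, hposv⟩ ⟨a, ha, b, hb, hab, hnegw, hnegv⟩
  rcases le_or_gt a c with hac | hca
  · exact (hposw a ⟨ha.1.le, hac⟩).not_gt hnegw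
  · exact (hposv b ⟨hb.1.le, by linarith⟩).not_gt hnegv

theorem zero_mem_subcritical (w v : ℝ → ℝ) : 0 ∈ subcritical w v :=
  ⟨1 / 2, by norm_num, fun x _ ↦ by simp [regularSol_zero], fun x _ ↦ by simp [regularSol_zero]⟩

namespace AlmostIncreasingWeight

variable {w v : ℝ → ℝ} {μ : ℝ}

theorem isOpen_subcritical (hw : AlmostIncreasingWeight w) (hv : AlmostIncreasingWeight v) :
    IsOpen (subcritical w v) := by
  refine isOpen_iff_eventually.2 ?_
  rintro μ ⟨c, hc, hposw, hposv⟩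
  filter_upwards [(hw.isOpen_regularSol_pos hc.2).mem_nhds hposw,
    (hv.isOpen_regularSol_pos (sub_lt_self 1 hc.1)).mem_nhds hposv] with ν hνw hνv
  exact ⟨c, hc, hνw, hνv⟩

theorem isOpen_supercritical (hw : AlmostIncreasingWeight w) (hv : AlmostIncreasingWeight v) :
    IsOpen (supercritical w v) := by
  refine isOpen_iff_eventually.2 ?_
  rintro μ ⟨a, ha, b, hb, hab, hnegw, hnegv⟩
  filter_upwards [(hw.continuous_regularSol_param ha.2).continuousAt.eventually_lt_const hnegw,
    (hv.continuous_regularSol_param hb.2).continuousAt.eventually_lt_const hnegv] with ν hνw hνv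
  exact ⟨a, ha, b, hb, hab, hνw, hνv⟩

theorem bddAbove_subcritical (hw : AlmostIncreasingWeight w) (hv : AlmostIncreasingWeight v) :
    BddAbove (subcritical w v) := by
  have hhalf : (1 / 2 : ℝ) ∈ Ioo (0 : ℝ) 1 := by norm_num
  refine ((hw.bddAbove_regularSol_pos hhalf).union (hv.bddAbove_regularSol_pos hhalf)).mono ?_
  rintro μ ⟨c, _, hposw, hposv⟩
  rcases le_total (1 / 2) c with hc | hc
  · exact .inl fun x hx ↦ hposw x ⟨hx.1, hx.2.trans hc⟩
  · exact .inr fun x hx ↦ hposv x ⟨hx.1, by linarith [hx.2]⟩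

theorem mem_subcritical_or_mem_supercritical (hw : AlmostIncreasingWeight w)
    (hv : AlmostIncreasingWeight v) (hμ : 0 < μ)
    (hzero : ∀ c ∈ Ioo (0 : ℝ) 1, ¬(regularSol w μ c = 0 ∧ regularSol v μ (1 - c) = 0)) :
    μ ∈ subcritical w v ∪ supercritical w v := by
  obtain ⟨a, ha, hposa, hnega⟩ := hw.exists_maximal_regularSol_pos hμ
  obtain ⟨b, hb, hposb, hnegb⟩ := hv.exists_maximal_regularSol_pos hμ
  rcases lt_trichotomy 1 (a + b) with hab | hab | hab
  · obtain ⟨c, hbc, hca⟩ := exists_between (sub_lt_iff_lt_add.2 hab)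
    refine .inl ⟨c, ⟨(sub_nonneg.2 hb.2).trans_lt hbc, hca.trans_le ha.2⟩,
      fun x hx ↦ hposa x ⟨hx.1, hx.2.trans_lt hca⟩, fun x hx ↦ hposb x ⟨hx.1, ?_⟩⟩
    linarith [hx.2]
  · have ha1 : a < 1 := by linarith [hb.1]
    have hb1 : b < 1 := by linarith [ha.1]
    refine (hzero a ⟨ha.1, ha1⟩ ⟨(hnega ha1).1, ?_⟩).elim
    rw [hab, add_sub_cancel_left]
    exact (hnegb hb1).1
  · have ha1 : a < 1 := by linarith [hb.1]
    have hb1 : b < 1 := by linarith [ha.1]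
    obtain ⟨a', hnega', haa', ha'⟩ := ((hnega ha1).2.and_eventually
      (Ioo_mem_nhdsGT (lt_sub_iff_add_lt.2 hab))).exists
    obtain ⟨b', hnegb', hbb', hb'⟩ := ((hnegb hb1).2.and_eventually
      (Ioo_mem_nhdsGT (lt_sub_comm.1 ha'))).exists
    exact .inr ⟨a', ⟨ha.1.trans haa', by linarith [hb.1]⟩, b',
      ⟨hb.1.trans hbb', by linarith [ha.1]⟩, lt_sub_iff_add_lt'.1 hb', hnega', hnegb'⟩

theorem exists_common_zero (hw : AlmostIncreasingWeight w) (hv : AlmostIncreasingWeight v) :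
    ∃ μ > 0, ∃ c ∈ Ioo (0 : ℝ) 1, regularSol w μ c = 0 ∧ regularSol v μ (1 - c) = 0 := by
  by_contra! hzero
  have hcover : Ici 0 ⊆ subcritical w v ∪ supercritical w v := fun μ (hμ : 0 ≤ μ) ↦
    hμ.eq_or_lt.elim (fun h ↦ .inl (h ▸ zero_mem_subcritical w v)) fun hμ ↦
      hw.mem_subcritical_or_mem_supercritical hv hμ fun c hc h ↦ hzero μ hμ c hc h.1 h.2
  obtain ⟨M, hM⟩ := hw.bddAbove_subcritical hv
  have hlarge : max M 0 + 1 ∈ supercritical w v :=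
    (hcover (by positivity : (0 : ℝ) ≤ max M 0 + 1)).resolve_left fun h ↦
      (hM h).not_gt ((le_max_left M 0).trans_lt (lt_add_one _))
  obtain ⟨μ, -, hsub, hsup⟩ := isPreconnected_Ici _ _ (hw.isOpen_subcritical hv)
    (hw.isOpen_supercritical hv) hcover ⟨0, self_mem_Ici, zero_mem_subcritical w v⟩
    ⟨_, (by positivity : (0 : ℝ) ≤ max M 0 + 1), hlarge⟩
  exact (disjoint_subcritical_supercritical w v).notMem_of_mem_left hsub hsup

end AlmostIncreasingWeight

theorem almostIncreasingWeight_of_continuousOn {w : ℝ → ℝ} (hcont : ContinuousOn w (Icc 0 1))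
    (hpos : ∀ x ∈ Ioo (0 : ℝ) 1, 0 < w x)
    (hzero : 0 < w 0 ∨ ∃ δ > 0, MonotoneOn w (Icc 0 δ)) : AlmostIncreasingWeight w := by
  refine ⟨hcont.mono Ioo_subset_Icc_self, hpos, fun b hb ↦ ?_⟩
  obtain ⟨a, ha0, hmono, hposa⟩ :
      ∃ a, 0 ≤ a ∧ MonotoneOn w (Icc 0 a) ∧ ∀ x ∈ Icc a b, 0 < w x := by
    rcases hzero with h0 | ⟨δ, hδ, hmono⟩
    · refine ⟨0, le_rfl, by simp, fun x hx ↦ ?_⟩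
      rcases hx.1.eq_or_lt with rfl | hx0
      · exact h0
      · exact hpos x ⟨hx0, hx.2.trans_lt hb.2⟩
    · exact ⟨δ, hδ.le, hmono, fun x hx ↦ hpos x ⟨hδ.trans_le hx.1, hx.2.trans_lt hb.2⟩⟩
  obtain ⟨m, hm0, hm⟩ :=
    isCompact_Icc.exists_forall_le' (hcont.mono (Icc_subset_Icc ha0 hb.2.le)) hposa
  obtain ⟨M, hM⟩ := isCompact_Icc.exists_bound_of_continuousOn hcont
  refine ⟨max 1 (M / m), fun s hs t ht ↦ ?_⟩
  have hs1 : s < 1 := hs.2.trans_lt hb.2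
  have hws : 0 < w s := hpos s ⟨hs.1, hs1⟩
  rcases le_total s a with hsa | has
  · calc w t ≤ 1 * w s := (hmono ⟨ht.1.le, ht.2.trans hsa⟩ ⟨hs.1.le, hsa⟩ ht.2).trans_eq
          (one_mul _).symm
      _ ≤ max 1 (M / m) * w s := by gcongr; exact le_max_left _ _
  · have htM : |w t| ≤ M := hM t ⟨ht.1.le, (ht.2.trans_lt hs1).le⟩
    calc w t ≤ M / m * m := by rw [div_mul_cancel₀ _ hm0.ne']; exact (le_abs_self _).trans htM
      _ ≤ max 1 (M / m) * w s := mul_le_mul (le_max_right _ _) (hm s ⟨has, hs.2⟩) hm0.le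
          (zero_le_one.trans (le_max_left _ _))

section LeastEigenvalue

variable {ω : ℝ → ℝ}

theorem exists_pos_isNeumannEigenvalue (hω : AlmostIncreasingWeight ω)
    (hω' : AlmostIncreasingWeight fun x ↦ ω (1 - x)) : ∃ μ > 0, IsNeumannEigenvalue ω μ := by
  obtain ⟨μ, hμ, c, hc, hzero, hzero'⟩ := hω.exists_common_zero hω'
  refine ⟨μ, hμ, isNeumannEigenvalue_of_neumannChar_eq_zero hω hω' hc ?_⟩
  rw [neumannChar, hzero, hzero', mul_zero, zero_mul, add_zero]

theorem exists_isLeast_pos_isNeumannEigenvalue (hω : AlmostIncreasingWeight ω)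
    (hω' : AlmostIncreasingWeight fun x ↦ ω (1 - x)) :
    ∃ μ, IsLeast {μ | 0 < μ ∧ IsNeumannEigenvalue ω μ} μ := by
  have hhalf : (1 / 2 : ℝ) ∈ Ioo (0 : ℝ) 1 := by norm_num
  let χ := neumannChar ω (fun x ↦ ω (1 - x)) (1 / 2)
  have heigen : {μ | 0 < μ ∧ IsNeumannEigenvalue ω μ} = Ici 0 ∩ χ ⁻¹' {0} := by
    ext μ
    refine ⟨fun ⟨hμ, h⟩ ↦ ⟨hμ.le, h.neumannChar_eq_zero hω hω' hμ.ne' hhalf⟩, fun ⟨hμ, h⟩ ↦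
      ⟨hμ.lt_of_ne ?_, isNeumannEigenvalue_of_neumannChar_eq_zero hω hω' hhalf h⟩⟩
    rintro rfl
    exact (hω.neumannChar_zero_pos hω' hhalf).ne' h
  have hclosed : IsClosed {μ | 0 < μ ∧ IsNeumannEigenvalue ω μ} :=
    heigen ▸ isClosed_Ici.inter
      (isClosed_singleton.preimage (hω.continuous_neumannChar hω' hhalf))
  exact ⟨_, hclosed.isLeast_csInf (exists_pos_isNeumannEigenvalue hω hω')
    ⟨0, fun _ hμ ↦ hμ.1.le⟩⟩

end LeastEigenvalue

theorem singular_ode_first_neumann_eigenvalue_general {ω : ℝ → ℝ} (hω : AlmostIncreasingWeight ω)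
    (hω' : AlmostIncreasingWeight fun x ↦ ω (1 - x)) :
    ∃ μ > (0 : ℝ), IsNeumannEigenvalue ω μ ∧
      (∀ μ', 0 < μ' → IsNeumannEigenvalue ω μ' → μ ≤ μ') ∧
      ∀ φ φd ψ ψd : ℝ → ℝ, NeumannSol ω μ φ φd → NeumannSol ω μ ψ ψd →
        ∃ c : ℝ, c ≠ 0 ∧ ∀ x ∈ Icc (0 : ℝ) 1, ψ x = c * φ x := by
  obtain ⟨μ, ⟨hμ, heigen⟩, hleast⟩ := exists_isLeast_pos_isNeumannEigenvalue hω hω'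
  exact ⟨μ, hμ, heigen, fun μ' hμ' h ↦ hleast ⟨hμ', h⟩,
    fun φ φd ψ ψd hφ hψ ↦ hφ.exists_eq_const_mul hψ hω⟩

/-- For a weight `ω` positive on `(0,1)` which may vanish at the endpoints
(but is then monotone near them), there is a smallest positive Neumann eigenvalue of
`-(ωφ')' = μωφ`, and the corresponding eigenfunction is unique up to a nonzero scalar. -/
theorem singular_ode_first_neumann_eigenvalue
    (ω : ℝ → ℝ)
    (hωc : ContinuousOn ω (Icc 0 1))
    (hωpos : ∀ x ∈ Ioo (0:ℝ) 1, 0 < ω x)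
    (hω0 : 0 < ω 0 ∨ (ω 0 = 0 ∧ ∃ δ > 0, MonotoneOn ω (Icc 0 δ)))
    (hω1 : 0 < ω 1 ∨ (ω 1 = 0 ∧ ∃ δ' > 0, AntitoneOn ω (Icc (1 - δ') 1))) :
    ∃ μ > (0:ℝ), IsNeumannEigenvalue ω μ ∧
      (∀ μ', 0 < μ' → IsNeumannEigenvalue ω μ' → μ ≤ μ') ∧
      ∀ φ φd ψ ψd : ℝ → ℝ, NeumannSol ω μ φ φd → NeumannSol ω μ ψ ψd →
        ∃ c : ℝ, c ≠ 0 ∧ ∀ x ∈ Icc (0:ℝ) 1, ψ x = c * φ x := by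
  refine singular_ode_first_neumann_eigenvalue_general
    (almostIncreasingWeight_of_continuousOn hωc hωpos (hω0.imp_right And.right))
    (almostIncreasingWeight_of_continuousOn ?_ (fun x hx ↦ ?_) ?_)
  · exact hωc.comp (by fun_prop) fun x hx ↦ ⟨sub_nonneg.2 hx.2, sub_le_self 1 hx.1⟩
  · exact hωpos (1 - x) ⟨sub_pos.2 hx.2, sub_lt_self 1 hx.1⟩
  · rw [sub_zero]
    refine hω1.imp_right fun ⟨_, δ, hδ, hanti⟩ ↦ ⟨δ, hδ, fun x hx y hy hxy ↦ ?_⟩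
    exact hanti ⟨sub_le_sub_left hy.2 1, sub_le_self 1 hy.1⟩
      ⟨sub_le_sub_left hx.2 1, sub_le_self 1 hx.1⟩ (sub_le_sub_left hxy 1)
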